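/- arXiv:2308.12126 — 2 statements merged into one kernel-verified Lean document; each statement's English description precedes it below -/
import Mathlib

section
/- Let E₁ and E₂ be real Hilbert spaces, H : E₁ × E₂ → ℝ, F₁ : E₁ → ℝ, F₂ : E₂ → ℝ, and let (y₁, y₂) ∈ E₁ × E₂, σ₁, σ₂ > 0. Suppose the map u ↦ H(u, y₂) is differentiable with gradient L₁-Lipschitz, and set g₁ = ∇_u H(u, y₂)|_{u = y₁}. Let x₁⁺ minimize over E₁ the function x ↦ F₁(x) + ⟨g₁, x − y₁⟩ + (1/(2σ₁))‖x − y₁‖². Suppose further that v ↦ H(x₁⁺, v) is differentiable with gradient L₂-Lipschitz, set g₂ = ∇_v H(x₁⁺, v)|_{v = y₂}, and let x₂⁺ minimize over E₂ the function x ↦ F₂(x) + ⟨g₂, x − y₂⟩ + (1/(2σ₂))‖x − y₂‖². Then, with ρ = min(1/(2σ₁) − L₁/2, 1/(2σ₂) − L₂/2), one has H(x₁⁺, x₂⁺) + F₁(x₁⁺) + F₂(x₂⁺) ≤ H(y₁, y₂) + F₁(y₁) + F₂(y₂) − ρ·(‖x₁⁺ − y₁‖² + ‖x₂⁺ − y₂‖²).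 (Two-block Gauss–Seidel step of the sufficient-decrease Theorem 4.1(i).) -/
open scoped RealInnerProductSpace

theorem descent_aux {E : Type*}
    [NormedAddCommGroup E] [InnerProductSpace ℝ E] [CompleteSpace E]
    (f : E → ℝ) (G : E → E) (L : ℝ)
    (hG : ∀ u : E, HasGradientAt f (G u) u)
    (hlip : ∀ u v : E, ‖G u - G v‖ ≤ L * ‖u - v‖) (x y : E) :
    f x ≤ f y + ⟪G y, x - y⟫ + L / 2 * ‖x - y‖ ^ 2 := by
  set d := x - y with hd
  have hder : ∀ t : ℝ, HasDerivAt
      (fun t : ℝ => f (y + t • d) - t * ⟪G y, d⟫ - L / 2 * ‖d‖ ^ 2 * t ^ 2)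
      (⟪G (y + t • d), d⟫ - ⟪G y, d⟫ - L * ‖d‖ ^ 2 * t) t := by
    intro t
    have h1 : HasDerivAt (fun t : ℝ => y + t • d) d t := by
      simpa using ((hasDerivAt_id t).smul_const d).const_add y
    have h2 : HasDerivAt (fun t : ℝ => f (y + t • d)) ⟪G (y + t • d), d⟫ t := by
      simpa [Function.comp_def] using (hG (y + t • d)).hasFDerivAt.comp_hasDerivAt t h1
    have h3 : HasDerivAt (fun t : ℝ => t * ⟪G y, d⟫) ⟪G y, d⟫ t := by
      simpa using (hasDerivAt_id t).mul_const ⟪G y, d⟫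
    have h4 : HasDerivAt (fun t : ℝ => L / 2 * ‖d‖ ^ 2 * t ^ 2) (L * ‖d‖ ^ 2 * t) t := by
      refine ((hasDerivAt_pow 2 t).const_mul (L / 2 * ‖d‖ ^ 2)).congr_deriv ?_
      norm_num
      ring
    exact (h2.sub h3).sub h4
  have hanti := antitoneOn_of_deriv_nonpos (convex_Icc (0 : ℝ) 1)
    (fun t _ => (hder t).continuousAt.continuousWithinAt)
    (fun t _ => (hder t).differentiableAt.differentiableWithinAt)
    (fun t ht => by
      rw [interior_Icc] at ht
      rw [(hder t).deriv, ← inner_sub_left]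
      have h5 := real_inner_le_norm (G (y + t • d) - G y) d
      have h6 := hlip (y + t • d) y
      rw [add_sub_cancel_left, norm_smul, Real.norm_of_nonneg ht.1.le] at h6
      have h7 := mul_le_mul_of_nonneg_right h6 (norm_nonneg d)
      nlinarith)
  have h := hanti (Set.left_mem_Icc.2 zero_le_one) (Set.right_mem_Icc.2 zero_le_one) zero_le_one
  have hx : y + d = x := by rw [hd]; abel
  simp [hx] at h
  linarith

/-- two-block Gauss–Seidel sufficient decrease of the prox-linear steps. -/
theorem two_block_prox_linear_sufficient_decrease
    {E₁ E₂ : Type*}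
    [NormedAddCommGroup E₁] [InnerProductSpace ℝ E₁] [CompleteSpace E₁]
    [NormedAddCommGroup E₂] [InnerProductSpace ℝ E₂] [CompleteSpace E₂]
    (H : E₁ × E₂ → ℝ) (F₁ : E₁ → ℝ) (F₂ : E₂ → ℝ)
    (y₁ : E₁) (y₂ : E₂) (σ₁ σ₂ : ℝ) (hσ₁ : 0 < σ₁) (hσ₂ : 0 < σ₂)
    (L₁ L₂ : ℝ) (hL₁ : 0 ≤ L₁) (hL₂ : 0 ≤ L₂)
    (G₁ : E₁ → E₁)
    (hG₁ : ∀ u : E₁, HasGradientAt (fun u' => H (u', y₂)) (G₁ u) u)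
    (hG₁lip : ∀ u v : E₁, ‖G₁ u - G₁ v‖ ≤ L₁ * ‖u - v‖)
    (x₁p : E₁)
    (hmin₁ : ∀ x : E₁,
      F₁ x₁p + ⟪G₁ y₁, x₁p - y₁⟫ + ‖x₁p - y₁‖ ^ 2 / (2 * σ₁) ≤
        F₁ x + ⟪G₁ y₁, x - y₁⟫ + ‖x - y₁‖ ^ 2 / (2 * σ₁))
    (G₂ : E₂ → E₂)
    (hG₂ : ∀ v : E₂, HasGradientAt (fun v' => H (x₁p, v')) (G₂ v) v)
    (hG₂lip : ∀ u v : E₂, ‖G₂ u - G₂ v‖ ≤ L₂ * ‖u - v‖)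
    (x₂p : E₂)
    (hmin₂ : ∀ x : E₂,
      F₂ x₂p + ⟪G₂ y₂, x₂p - y₂⟫ + ‖x₂p - y₂‖ ^ 2 / (2 * σ₂) ≤
        F₂ x + ⟪G₂ y₂, x - y₂⟫ + ‖x - y₂‖ ^ 2 / (2 * σ₂)) :
    H (x₁p, x₂p) + F₁ x₁p + F₂ x₂p ≤
      H (y₁, y₂) + F₁ y₁ + F₂ y₂ -
        min (1 / (2 * σ₁) - L₁ / 2) (1 / (2 * σ₂) - L₂ / 2) *
          (‖x₁p - y₁‖ ^ 2 + ‖x₂p - y₂‖ ^ 2) := by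
  have d₁ := descent_aux _ G₁ L₁ hG₁ hG₁lip x₁p y₁
  have d₂ := descent_aux _ G₂ L₂ hG₂ hG₂lip x₂p y₂
  have m₁ := hmin₁ y₁
  have m₂ := hmin₂ y₂
  simp only [sub_self, inner_zero_right, norm_zero] at m₁ m₂
  have e₁ := mul_le_mul_of_nonneg_right
    (min_le_left (1 / (2 * σ₁) - L₁ / 2) (1 / (2 * σ₂) - L₂ / 2)) (sq_nonneg ‖x₁p - y₁‖)
  have e₂ := mul_le_mul_of_nonneg_right
    (min_le_right (1 / (2 * σ₁) - L₁ / 2) (1 / (2 * σ₂) - L₂ / 2)) (sq_nonneg ‖x₂p - y₂‖)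
  rw [div_eq_mul_one_div] at m₁ m₂
  norm_num only at m₁ m₂
  ring_nf at *
  linarith
end

section
/- Let a, d : ℕ → ℝ be nonnegative sequences with d summable, and suppose (a(k+1))² ≤ d(k)·a(k) for all k ∈ ℕ. Then a is summable, with ∑_{k≥1} a(k) ≤ a(0) + ∑_k d(k). (Key summation lemma in the proof of Theorem 4.6, obtained from 2ab ≤ a² + b² applied to the KŁ inequality ‖z^{k+1} − w^k‖² ≤ C(φ(G k) − φ(G(k+1)))·‖z^k − w^{k−1}‖.) -/
/-- if `a, d ≥ 0`, `d` is summable, and `a (k+1) ^ 2 ≤ d k * a k` for all `k`,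
then `a` is summable with `∑_{k ≥ 1} a k ≤ a 0 + ∑ k, d k`. -/
theorem summable_of_sq_le_mul
    (a d : ℕ → ℝ) (ha : ∀ k, 0 ≤ a k) (hd : ∀ k, 0 ≤ d k)
    (hd_sum : Summable d)
    (hrec : ∀ k : ℕ, (a (k + 1)) ^ 2 ≤ d k * a k) :
    Summable a ∧ (∑' k : ℕ, a (k + 1)) ≤ a 0 + ∑' k : ℕ, d k := by
  have h1 : ∀ k, 2 * a (k + 1) ≤ d k + a k := by
    intro k
    have h := hrec k
    have h0 := ha k
    have h2 := hd k
    refine le_of_abs_le (abs_le_of_sq_le_sq ?_ (by linarith))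
    nlinarith [sq_nonneg (d k - a k)]
  have h2 : ∀ n, ∑ k ∈ Finset.range n, a (k + 1) + a n ≤ a 0 + ∑ k ∈ Finset.range n, d k := by
    intro n
    induction n with
    | zero => simp
    | succ n ih =>
      rw [Finset.sum_range_succ, Finset.sum_range_succ]
      linarith [h1 n]
  have h3 : ∀ n, ∑ k ∈ Finset.range n, a (k + 1) ≤ a 0 + ∑' k : ℕ, d k := by
    intro n
    have h4 := hd_sum.sum_le_tsum (Finset.range n) (fun i _ => hd i)
    linarith [h2 n, ha n]
  exact ⟨(summable_nat_add_iff 1).1 (summable_of_sum_range_le (fun k => ha (k + 1)) h3),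
    Real.tsum_le_of_sum_range_le (fun k => ha (k + 1)) h3⟩
end
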